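/- arXiv:1708.08480 — 2 statements merged into one kernel-verified Lean document; each statement's English description precedes it below -/
import Mathlib

section
/- For every natural number t ≥ 1: every play of the reversible pebble game on t nodes that contains some configuration in which the final node t is pebbled must contain some configuration with at least ⌊log₂ t⌋ + 1 pebbled nodes. -/
/- Bennett's reversible pebble game on `t` nodes numbered `1, …, t`.
A configuration is a finite set `P` of pebbled node indices (a subset of
`{1, …, t}`).  A legal move toggles the pebbled status of exactly one node
`j` with `1 ≤ j ≤ t`, provided `j = 1` or node `j - 1` is pebbled. -/
def PebbleMove (t : ℕ) (P P' : Finset ℕ) : Prop :=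
  ∃ j : ℕ, 1 ≤ j ∧ j ≤ t ∧ (j = 1 ∨ j - 1 ∈ P) ∧
    P' = (if j ∈ P then P.erase j else insert j P)

/-- A play is a finite sequence of configurations beginning with the empty
configuration, each consecutive pair related by a legal move. -/
def PebblePlay (t : ℕ) (L : List (Finset ℕ)) : Prop :=
  L.head? = some ∅ ∧ L.Chain' (PebbleMove t)

/-!
With `k` pebbles only the first `2 ^ k - 1` nodes after the source can be pebbled, by induction on
`k`. Suppose node `h` is out of reach of `k` pebbles, and consider a play with `k + 1` pebbles.
If all `k + 1` of them were ever beyond `h`, none would be left at or before `h`. Reversing the play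
from that moment back to the empty configuration, at most `k` pebbles are at or before `h` as long
as one remains beyond `h`; so `h` stays unpebbled, and then the last pebble beyond `h` can never be
removed. Hence at most `k` pebbles are beyond `h` at any time, so the nodes beyond `h` are
themselves played with `k` pebbles, with `h` acting as the source.
-/

open Finset

/-- A move of the reversible pebble game on the nodes beyond the source `b`: the status of node
`j + 1` may change if `j = b` or `j` is pebbled. The status may also stay the same, so that a move
restricts to a move on any interval of nodes. -/
def PebbleStep (b : ℕ) (P P' : Finset ℕ) : Prop :=
  ∃ j, (j = b ∨ j ∈ P) ∧ ∀ x ≠ j + 1, (x ∈ P' ↔ x ∈ P)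

/-- `PebbleReachable b k P Q` says that the game with source `b` can be played from `P` to `Q`
without ever having more than `k` pebbles on the nodes. The bound is imposed on both ends of each
move to make the relation symmetric; it says nothing about `P` when no move is made. -/
def PebbleReachable (b k : ℕ) : Finset ℕ → Finset ℕ → Prop :=
  Relation.ReflTransGen fun P P' ↦ PebbleStep b P P' ∧ #P ≤ k ∧ #P' ≤ k

theorem card_filter_le_add_card_filter_lt (h : ℕ) (P : Finset ℕ) :
    #{x ∈ P | x ≤ h} + #{x ∈ P | h < x} = #P := by
  simpa only [not_le] using card_filter_add_card_filter_not (s := P) (· ≤ h)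

namespace PebbleStep

variable {b h : ℕ} {P P' : Finset ℕ}

theorem symm (hstep : PebbleStep b P P') : PebbleStep b P' P := by
  obtain ⟨j, hj, hagree⟩ := hstep
  exact ⟨j, hj.imp_right (hagree j j.lt_succ_self.ne).2, fun x hx ↦ (hagree x hx).symm⟩

theorem filter_le (h : ℕ) (hstep : PebbleStep b P P') :
    PebbleStep b {x ∈ P | x ≤ h} {x ∈ P' | x ≤ h} := by
  obtain ⟨j, hj, hagree⟩ := hstep
  rcases lt_or_ge j h with hjh | hhj
  · refine ⟨j, hj.imp_right fun hjP ↦ mem_filter.2 ⟨hjP, hjh.le⟩, fun x hx ↦ ?_⟩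
    rw [mem_filter, mem_filter, hagree x hx]
  · refine ⟨b, .inl rfl, fun x _ ↦ ?_⟩
    rw [mem_filter, mem_filter]
    exact and_congr_left fun hxh ↦ hagree x (by omega)

theorem filter_lt (hbh : b ≤ h) (hstep : PebbleStep b P P') :
    PebbleStep h {x ∈ P | h < x} {x ∈ P' | h < x} := by
  obtain ⟨j, hj, hagree⟩ := hstep
  rcases lt_or_ge j h with hjh | hhj
  · refine ⟨h, .inl rfl, fun x _ ↦ ?_⟩
    rw [mem_filter, mem_filter]
    exact and_congr_left fun hhx ↦ hagree x (by omega)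
  · have hj' : j = h ∨ j ∈ {x ∈ P | h < x} := by
      rw [mem_filter]
      grind
    refine ⟨j, hj', fun x hx ↦ ?_⟩
    rw [mem_filter, mem_filter, hagree x hx]

theorem filter_lt_nonempty (hbh : b < h) (hstep : PebbleStep b P P') (hhP : h ∉ P)
    (hP : {x ∈ P | h < x}.Nonempty) : {x ∈ P' | h < x}.Nonempty := by
  obtain ⟨j, hj, hagree⟩ := hstep
  obtain ⟨x, hx⟩ := hP
  obtain ⟨hxP, hhx⟩ := mem_filter.1 hx
  by_cases hxj : x = j + 1
  · -- A pebble removed from `j + 1` leaves one on `j`, which lies beyond `h` because `j ≠ h`.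
    have hjP : j ∈ P := hj.resolve_left (by omega)
    have hjh : j ≠ h := ne_of_mem_of_not_mem hjP hhP
    exact ⟨j, mem_filter.2 ⟨(hagree j (by omega)).2 hjP, by omega⟩⟩
  · exact ⟨x, mem_filter.2 ⟨(hagree x hxj).2 hxP, hhx⟩⟩

end PebbleStep

theorem PebbleMove.pebbleStep {t : ℕ} {P P' : Finset ℕ} (hmove : PebbleMove t P P') :
    PebbleStep 0 P P' := by
  obtain ⟨j, hj, -, hlegal, rfl⟩ := hmove
  refine ⟨j - 1, hlegal.imp_left fun hj1 ↦ by omega, fun x hx ↦ ?_⟩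
  have hxj : x ≠ j := by omega
  split_ifs <;> simp [hxj]

namespace PebbleReachable

variable {b h k : ℕ} {P Q R : Finset ℕ}

theorem symm (hPQ : PebbleReachable b k P Q) : PebbleReachable b k Q P := by
  have : Std.Symm fun P P' ↦ PebbleStep b P P' ∧ #P ≤ k ∧ #P' ≤ k :=
    ⟨fun _ _ ⟨hstep, hP, hP'⟩ ↦ ⟨hstep.symm, hP', hP⟩⟩
  exact Relation.ReflTransGen.stdSymm.symm _ _ hPQ

theorem card_le (hPQ : PebbleReachable b k P Q) (hP : #P ≤ k) : #Q ≤ k := by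
  rcases hPQ.cases_tail with rfl | ⟨_, _, -, -, hQ⟩
  exacts [hP, hQ]

theorem filter_le_and_filter_lt_nonempty (hbh : b < h)
    (hunreach : ∀ P, PebbleReachable b k ∅ P → h ∉ P) (hQR : PebbleReachable b (k + 1) Q R)
    (hlow : PebbleReachable b k ∅ {x ∈ Q | x ≤ h}) (hhigh : {x ∈ Q | h < x}.Nonempty) :
    PebbleReachable b k ∅ {x ∈ R | x ≤ h} ∧ {x ∈ R | h < x}.Nonempty := by
  induction hQR with
  | refl => exact ⟨hlow, hhigh⟩
  | @tail R R' _ hmove ih =>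
    obtain ⟨hstep, -, hR'⟩ := hmove
    obtain ⟨hlowR, hhighR⟩ := ih
    have hhR : h ∉ R := fun hhR ↦ hunreach _ hlowR (mem_filter.2 ⟨hhR, le_rfl⟩)
    have hhighR' := hstep.filter_lt_nonempty hbh hhR hhighR
    have hcard : #{x ∈ R' | x ≤ h} ≤ k := by
      have := card_filter_le_add_card_filter_lt h R'
      have := hhighR'.card_pos
      omega
    exact ⟨hlowR.tail ⟨hstep.filter_le h, hlowR.card_le (Nat.zero_le k), hcard⟩, hhighR'⟩

theorem card_filter_lt_le (hbh : b < h) (hunreach : ∀ P, PebbleReachable b k ∅ P → h ∉ P)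
    (hP : PebbleReachable b (k + 1) ∅ P) : #{x ∈ P | h < x} ≤ k := by
  by_contra! hcard
  have hlow : #{x ∈ P | x ≤ h} = 0 := by
    have := card_filter_le_add_card_filter_lt h P
    have := hP.card_le (Nat.zero_le _)
    omega
  have hhigh : {x ∈ P | h < x}.Nonempty := card_pos.1 (by omega)
  have hlow_reach : PebbleReachable b k ∅ {x ∈ P | x ≤ h} := by
    rw [card_eq_zero.1 hlow]
    exact .refl
  simpa using (filter_le_and_filter_lt_nonempty hbh hunreach hP.symm hlow_reach hhigh).2

theorem filter_lt (hbh : b < h) (hunreach : ∀ P, PebbleReachable b k ∅ P → h ∉ P)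
    (hP : PebbleReachable b (k + 1) ∅ P) : PebbleReachable h k ∅ {x ∈ P | h < x} := by
  induction hP with
  | refl => exact .refl
  | tail hR hmove ih =>
    exact ih.tail ⟨hmove.1.filter_lt hbh.le, card_filter_lt_le hbh hunreach hR,
      card_filter_lt_le hbh hunreach (hR.tail hmove)⟩

theorem lt_add_two_pow (hP : PebbleReachable b k ∅ P) {x : ℕ} (hx : x ∈ P) : x < b + 2 ^ k := by
  induction k generalizing b P x with
  | zero =>
    have hcard : #P ≤ 0 := hP.card_le le_rfl
    exact absurd hcard (card_pos.2 ⟨x, hx⟩).not_ge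
  | succ k ih =>
    have hbh : b < b + 2 ^ k := Nat.lt_add_of_pos_right (Nat.two_pow_pos k)
    rw [pow_succ, mul_two, ← add_assoc]
    rcases le_or_gt x (b + 2 ^ k) with hxh | hhx
    · exact hxh.trans_lt (Nat.lt_add_of_pos_right (Nat.two_pow_pos k))
    · have hunreach : ∀ Q, PebbleReachable b k ∅ Q → b + 2 ^ k ∉ Q :=
        fun Q hQ hmem ↦ (ih hQ hmem).false
      exact ih (hP.filter_lt hbh hunreach) (mem_filter.2 ⟨hx, hhx⟩)

end PebbleReachable

theorem PebblePlay.pebbleReachable {t k : ℕ} {L : List (Finset ℕ)} (hL : PebblePlay t L)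
    (hcard : ∀ P ∈ L, #P ≤ k) {P : Finset ℕ} (hP : P ∈ L) : PebbleReachable 0 k ∅ P := by
  obtain ⟨hhead, hchain⟩ := hL
  have hbounded : L.IsChain fun P P' ↦ PebbleStep 0 P P' ∧ #P ≤ k ∧ #P' ≤ k :=
    hchain.imp_of_mem_imp fun P P' hP hP' hmove ↦ ⟨hmove.pebbleStep, hcard P hP, hcard P' hP'⟩
  refine hbounded.induction (PebbleReachable 0 k ∅) L (fun _ _ hmove hQ ↦ hQ.tail hmove) ?_ P hP
  intro hne
  rw [(List.head_eq_iff_head?_eq_some hne).2 hhead]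
  exact .refl

theorem pebble_game_final_node_lower_bound_general {t m : ℕ} (hm : 1 ≤ m)
    {L : List (Finset ℕ)} (hL : PebblePlay t L) (hreach : ∃ P ∈ L, m ∈ P) :
    ∃ P ∈ L, Nat.log 2 m + 1 ≤ #P := by
  by_contra! hfew
  obtain ⟨P, hP, hmP⟩ := hreach
  have hreachable : PebbleReachable 0 (Nat.log 2 m) ∅ P :=
    hL.pebbleReachable (fun Q hQ ↦ Nat.le_of_lt_succ (hfew Q hQ)) hP
  have hlt : m < 2 ^ Nat.log 2 m := by simpa using hreachable.lt_add_two_pow hmP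
  exact hlt.not_ge (Nat.pow_log_le_self 2 (by omega))

/-- Every play of the reversible pebble game on `t ≥ 1` nodes containing a
configuration in which the final node `t` is pebbled must contain a
configuration with at least `⌊log₂ t⌋ + 1` pebbled nodes. -/
theorem pebble_game_final_node_lower_bound (t : ℕ) (ht : 1 ≤ t)
    (L : List (Finset ℕ)) (hL : PebblePlay t L)
    (hreach : ∃ P ∈ L, t ∈ P) :
    ∃ P ∈ L, Nat.log 2 t + 1 ≤ P.card :=
  pebble_game_final_node_lower_bound_general ht hL hreach
end

section
/- For all natural numbers k ≥ 2 and n ≥ 0, there exists a play of the reversible pebble game on k^n nodes, consisting of at most (2k−1)^n legal moves, whose final configuration is exactly the singleton {k^n}, and in which every configuration of the play contains at most n·(k−1) + 1 pebbled nodes. -/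
/-! A segment of `(l + 1) * m` nodes splits into `l + 1` blocks of `m` nodes. Pebble the last node
of each block in turn, then undo the first `l` of these stages in reverse order, which is possible
because every move is its own inverse. This costs `2 * l + 1` block computations, and while a block
is being processed at most `l` other block ends are occupied. Starting from a single node and
iterating `n` times gives the exponential move count and the linear pebble count. -/

theorem PebbleMove.symm {t : ℕ} {P Q : Finset ℕ} (h : PebbleMove t P Q) : PebbleMove t Q P := by
  obtain ⟨j, hj_pos, hjt, hpred, rfl⟩ := h
  refine ⟨j, hj_pos, hjt, hpred.imp_right fun hmem => ?_, ?_⟩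
  · have hne : j - 1 ≠ j := by lia
    split_ifs <;> simp [hne, hmem]
  · by_cases hj : j ∈ P <;> simp [hj]

theorem PebbleMove.ne {t : ℕ} {P Q : Finset ℕ} (h : PebbleMove t P Q) : P ≠ Q := by
  obtain ⟨j, -, -, -, rfl⟩ := h
  split_ifs with hj
  · exact fun h => Finset.notMem_erase j P (h ▸ hj)
  · exact fun h => hj (h ▸ Finset.mem_insert_self j P)

theorem PebbleMove.insert_succ {t a : ℕ} {P : Finset ℕ} (ha : a = 0 ∨ a ∈ P) (hat : a + 1 ≤ t)
    (hnotMem : a + 1 ∉ P) : PebbleMove t P (insert (a + 1) P) :=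
  ⟨a + 1, by lia, hat, by simpa using ha, by simp [hnotMem]⟩

/-- The configuration graph of the reversible pebble game on `t` nodes: plays are its walks from
the empty configuration. -/
def pebbleGraph (t : ℕ) : SimpleGraph (Finset ℕ) where
  Adj := PebbleMove t
  symm := ⟨fun _ _ h => h.symm⟩
  loopless := ⟨fun _ h => h.ne rfl⟩

/-- `ReachableWithin t s c P Q`: on `t` nodes, configuration `Q` can be reached from `P` in at most
`s` moves, with at most `c` pebbles in every configuration visited, `P` and `Q` included. -/
def ReachableWithin (t s c : ℕ) (P Q : Finset ℕ) : Prop :=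
  ∃ w : (pebbleGraph t).Walk P Q, w.length ≤ s ∧ ∀ R ∈ w.support, R.card ≤ c

namespace ReachableWithin

variable {t s s' c c' : ℕ} {P Q R : Finset ℕ}

theorem of_move (h : PebbleMove t P Q) (hP : P.card ≤ c) (hQ : Q.card ≤ c) :
    ReachableWithin t 1 c P Q := by
  have hadj : (pebbleGraph t).Adj P Q := h
  exact ⟨hadj.toWalk, by simp, by simp [hP, hQ]⟩

theorem mono (h : ReachableWithin t s c P Q) (hs : s ≤ s') (hc : c ≤ c') :
    ReachableWithin t s' c' P Q := by
  obtain ⟨w, hlen, hcard⟩ := h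
  exact ⟨w, hlen.trans hs, fun R hR => (hcard R hR).trans hc⟩

theorem symm (h : ReachableWithin t s c P Q) : ReachableWithin t s c Q P := by
  obtain ⟨w, hlen, hcard⟩ := h
  exact ⟨w.reverse, by simpa using hlen, by simpa using hcard⟩

theorem trans (hPQ : ReachableWithin t s c P Q) (hQR : ReachableWithin t s' c Q R) :
    ReachableWithin t (s + s') c P R := by
  obtain ⟨v, hv_len, hv_card⟩ := hPQ
  obtain ⟨w, hw_len, hw_card⟩ := hQR
  refine ⟨v.append w, ?_, fun S hS => ?_⟩
  · rw [SimpleGraph.Walk.length_append]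
    exact add_le_add hv_len hw_len
  · exact ((SimpleGraph.Walk.mem_support_append_iff v w).1 hS).elim (hv_card S) (hw_card S)

theorem exists_pebblePlay (h : ReachableWithin t s c ∅ Q) :
    ∃ L : List (Finset ℕ), PebblePlay t L ∧ L.length ≤ s + 1 ∧ L.getLast? = some Q ∧
      ∀ P ∈ L, P.card ≤ c := by
  obtain ⟨w, hlen, hcard⟩ := h
  refine ⟨w.support, ⟨?_, w.isChain_adj_support⟩, by simpa using hlen, ?_, hcard⟩
  · rw [List.head?_eq_some_head w.support_ne_nil, w.head_support]
  · rw [List.getLast?_eq_some_getLast w.support_ne_nil, w.getLast_support]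

end ReachableWithin

/-- `SegmentPebbling m s c`: from every configuration `C` in which node `a` is pebbled (or `a = 0`,
the always available input) and the `m` nodes after `a` are free, one can additionally pebble
`a + m` in at most `s` moves, using at most `c` pebbles beyond those of `C`. -/
def SegmentPebbling (m s c : ℕ) : Prop :=
  ∀ ⦃t a : ℕ⦄ ⦃C : Finset ℕ⦄, a = 0 ∨ a ∈ C → Disjoint C (Finset.Ioc a (a + m)) → a + m ≤ t →
    ReachableWithin t s (C.card + c) C (insert (a + m) C)

theorem segmentPebbling_one : SegmentPebbling 1 1 1 := by
  intro t a C ha hfree hat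
  have hnotMem : a + 1 ∉ C := Finset.disjoint_right.1 hfree (by simp)
  exact .of_move (.insert_succ ha hat hnotMem) (by lia) (Finset.card_insert_le _ _)

/-- The last nodes `a + m, a + 2 * m, …, a + i * m` of the first `i` blocks of `m` nodes
after `a`. -/
def checkpoints (a m i : ℕ) : Finset ℕ :=
  (Finset.range i).image fun j => a + (j + 1) * m

section checkpoints

variable {a m i : ℕ} {C : Finset ℕ}

theorem union_checkpoints_succ :
    C ∪ checkpoints a m (i + 1) = insert (a + i * m + m) (C ∪ checkpoints a m i) := by
  rw [checkpoints, Finset.range_add_one, Finset.image_insert, Finset.union_insert, add_one_mul,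
    add_assoc, checkpoints]

theorem card_union_checkpoints_le : (C ∪ checkpoints a m i).card ≤ C.card + i :=
  calc
    (C ∪ checkpoints a m i).card ≤ C.card + (checkpoints a m i).card := Finset.card_union_le _ _
    _ ≤ C.card + i := by
      gcongr
      exact Finset.card_image_le.trans_eq (Finset.card_range i)

theorem le_of_mem_checkpoints {x : ℕ} (hx : x ∈ checkpoints a m i) : x ≤ a + i * m := by
  obtain ⟨j, hj, rfl⟩ := Finset.mem_image.1 hx
  have hji : j + 1 ≤ i := Finset.mem_range.1 hj
  gcongr

theorem eq_zero_or_mem_union_checkpoints (ha : a = 0 ∨ a ∈ C) :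
    a + i * m = 0 ∨ a + i * m ∈ C ∪ checkpoints a m i := by
  cases i with
  | zero => simpa [checkpoints] using ha
  | succ i => right; simp [union_checkpoints_succ, add_one_mul, add_assoc]

theorem disjoint_union_checkpoints_Ioc (hfree : Disjoint C (Finset.Ioc a (a + (i + 1) * m))) :
    Disjoint (C ∪ checkpoints a m i) (Finset.Ioc (a + i * m) (a + i * m + m)) := by
  refine Finset.disjoint_union_left.2 ⟨hfree.mono_right ?_, Finset.disjoint_left.2 fun x hx => ?_⟩
  · exact Finset.Ioc_subset_Ioc (by lia) (by lia)
  · have hle := le_of_mem_checkpoints hx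
    simp [hle]

end checkpoints

namespace SegmentPebbling

variable {m s c : ℕ}

theorem reachableWithin_checkpoints (h : SegmentPebbling m s c) {t a : ℕ} {C : Finset ℕ}
    (ha : a = 0 ∨ a ∈ C) (i : ℕ) (hfree : Disjoint C (Finset.Ioc a (a + (i + 1) * m)))
    (hat : a + (i + 1) * m ≤ t) :
    ReachableWithin t ((i + 1) * s) (C.card + i + c) C (C ∪ checkpoints a m (i + 1)) := by
  have pebble_block (j : ℕ) (hj : j ≤ i) :
      ReachableWithin t s (C.card + i + c) (C ∪ checkpoints a m j)
        (C ∪ checkpoints a m (j + 1)) := by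
    have hji : a + (j + 1) * m ≤ a + (i + 1) * m := by gcongr
    have hfree' := hfree.mono_right (Finset.Ioc_subset_Ioc_right hji)
    have hcard : (C ∪ checkpoints a m j).card ≤ C.card + j := card_union_checkpoints_le
    rw [union_checkpoints_succ]
    exact (h (eq_zero_or_mem_union_checkpoints ha) (disjoint_union_checkpoints_Ioc hfree')
      (by lia)).mono le_rfl (by lia)
  have pebble_blocks (j : ℕ) (hj : j ≤ i) :
      ReachableWithin t ((j + 1) * s) (C.card + i + c) C (C ∪ checkpoints a m (j + 1)) := by
    induction j with
    | zero => simpa [checkpoints] using pebble_block 0 hj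
    | succ j ih =>
      rw [add_one_mul (j + 1) s]
      exact (ih (by lia)).trans (pebble_block (j + 1) hj)
  exact pebble_blocks i le_rfl

theorem mul (h : SegmentPebbling m s c) (l : ℕ) :
    SegmentPebbling ((l + 1) * m) ((2 * l + 1) * s) (l + c) := by
  cases l with
  | zero => simpa using h
  | succ l =>
    intro t a C ha hfree hat
    set top := a + (l + 2) * m
    have pebble_all : ReachableWithin t ((l + 2) * s) (C.card + (l + 1 + c)) C
        (insert top C ∪ checkpoints a m (l + 1)) := by
      have hforward := h.reachableWithin_checkpoints ha (l + 1) hfree hat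
      rw [union_checkpoints_succ, add_assoc a, ← add_one_mul, ← Finset.insert_union] at hforward
      exact hforward.mono le_rfl (by lia)
    have pebble_below_top : ReachableWithin t ((l + 1) * s) (C.card + (l + 1 + c)) (insert top C)
        (insert top C ∪ checkpoints a m (l + 1)) := by
      have hbelow : Disjoint (insert top C) (Finset.Ioc a (a + (l + 1) * m)) := by
        refine Finset.disjoint_insert_left.2
          ⟨?_, hfree.mono_right (Finset.Ioc_subset_Ioc_right (by lia))⟩
        rw [Finset.mem_Ioc]
        rcases m.eq_zero_or_pos with rfl | hm <;> lia
      have hcard : (insert top C).card ≤ C.card + 1 := Finset.card_insert_le _ _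
      exact (h.reachableWithin_checkpoints (ha.imp_right Finset.mem_insert_of_mem) l hbelow
        (by lia)).mono le_rfl (by lia)
    exact (pebble_all.trans pebble_below_top.symm).mono (by lia) le_rfl

end SegmentPebbling

theorem segmentPebbling_pow (l n : ℕ) :
    SegmentPebbling ((l + 1) ^ n) ((2 * l + 1) ^ n) (n * l + 1) := by
  induction n with
  | zero => simpa using segmentPebbling_one
  | succ n ih =>
    rw [pow_succ', pow_succ', show (n + 1) * l + 1 = l + (n * l + 1) by ring]
    exact ih.mul l

/-- Bennett's `k`-ary strategy: for `k ≥ 2` and any `n`, there is a play of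
the reversible pebble game on `k ^ n` nodes, consisting of at most
`(2k - 1) ^ n` legal moves (i.e., with at most `(2k - 1) ^ n + 1`
configurations), whose final configuration is exactly `{k ^ n}`, and in which
every configuration contains at most `n * (k - 1) + 1` pebbled nodes. -/
theorem bennett_k_ary_strategy (k n : ℕ) (hk : 2 ≤ k) :
    ∃ L : List (Finset ℕ), PebblePlay (k ^ n) L ∧
      L.length ≤ (2 * k - 1) ^ n + 1 ∧
      L.getLast? = some ({k ^ n} : Finset ℕ) ∧
      ∀ P ∈ L, P.card ≤ n * (k - 1) + 1 := by
  obtain ⟨l, rfl⟩ : ∃ l, k = l + 1 := ⟨k - 1, by lia⟩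
  have hreach : ReachableWithin ((l + 1) ^ n) ((2 * l + 1) ^ n) (n * l + 1) ∅ {(l + 1) ^ n} := by
    simpa using segmentPebbling_pow l n (C := ∅) (Or.inl rfl) (Finset.disjoint_empty_left _)
      (zero_add _).le
  exact hreach.exists_pebblePlay
end
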